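/- Let 0 < γ < p ≤ ∞ and 0 ≤ τ < 1/p (also allowing the cases τ = 1/p via M^p_{1/p} = L^∞ and τ > 1/p via M^p_τ = {0}). Then there is C > 0 such that for every g ∈ L^p_loc(ℝⁿ), ‖ (M(|g|^γ))^{1/γ} ‖_{M^p_τ} ≤ C ‖g‖_{M^p_τ}, where M is the Hardy–Littlewood maximal operator and ‖f‖_{M^p_τ} = sup_{J∈ℤ,v∈ℤⁿ} 2^{nJτ}‖f‖_{L^p(Q_{J,v})}. -/

import Mathlib

open MeasureTheory
open scoped ENNReal NNReal

/-- The open dyadic cube `Q_{J,v} = 2^{−J}v + (0, 2^{−J})ⁿ`. -/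
def dyadicCube (n : ℕ) (J : ℤ) (v : Fin n → ℤ) : Set (EuclideanSpace ℝ (Fin n)) :=
  {x | ∀ i, (2 : ℝ) ^ (-J) * (v i : ℝ) < x i ∧ x i < (2 : ℝ) ^ (-J) * ((v i : ℝ) + 1)}

/-- The `L^p` (quasi-)norm (`0 < p ≤ ∞`) of a `[0,∞]`-valued function on a set `s ⊆ ℝⁿ`. -/
noncomputable def LpOn {n : ℕ} (p : ℝ≥0∞) (F : EuclideanSpace ℝ (Fin n) → ℝ≥0∞)
    (s : Set (EuclideanSpace ℝ (Fin n))) : ℝ≥0∞ :=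
  if p = ∞ then essSup F (volume.restrict s)
  else (∫⁻ x in s, F x ^ p.toReal) ^ (1 / p.toReal)

/-- The Morrey norm `‖F‖_{M^p_τ} = sup_{J,v} 2^{nJτ} ‖F‖_{L^p(Q_{J,v})}`. -/
noncomputable def morreyNormE (n : ℕ) (p : ℝ≥0∞) (τ : ℝ)
    (F : EuclideanSpace ℝ (Fin n) → ℝ≥0∞) : ℝ≥0∞ :=
  ⨆ (J : ℤ) (v : Fin n → ℤ),
    ENNReal.ofReal ((2 : ℝ) ^ ((n : ℝ) * (J : ℝ) * τ)) * LpOn p F (dyadicCube n J v)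

/-- The Hardy–Littlewood maximal function
`M g (x) = sup_{R>0} |B(0,R)|⁻¹ ∫_{B(x,R)} g`. -/
noncomputable def HLmax {n : ℕ} (g : EuclideanSpace ℝ (Fin n) → ℝ≥0∞)
    (x : EuclideanSpace ℝ (Fin n)) : ℝ≥0∞ :=
  ⨆ R : Set.Ioi (0 : ℝ), (volume (Metric.ball x (R : ℝ)))⁻¹ * ∫⁻ y in Metric.ball x (R : ℝ), g y

/-!
Since `‖F ^ r‖_{M^p_τ} = ‖F‖_{M^{pr}_{τ/r}} ^ r`, replacing `|g|` by `f = |g| ^ γ` reduces the claim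
to `γ = 1` and `p > 1`. There the Vitali covering lemma gives the weak `(1, 1)` inequality, and
integrating it over the levels `t`, with `f` truncated at `t / 2`, bounds the maximal operator on
`L^p(ℝⁿ)`.

On a dyadic cube of side `2^{−J}`, averages over balls of radius at most `2^{−J}` only see `f` on
that cube and its neighbours, `3ⁿ` cubes in all, so the `L^p` bound applies. By Hölder, averages
over balls of radius about `2^{−K}` with `K ≤ J` are at most a constant times
`2^{Kn(1/p − τ)} ‖f‖_{M^p_τ}`. If `τ ≤ 1/p` this is largest for `K = J`, where it matches the Morrey
bound on the cube. If `τ > 1/p`, subdividing a cube indefinitely shows that `f` vanishes almost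
everywhere.
-/

section LayerCake

variable {α : Type*} [MeasurableSpace α] {μ : Measure α} {f : α → ℝ≥0∞}

lemma lintegral_Ioi_ofReal_rpow_eq_top (s : ℝ) :
    ∫⁻ t in Set.Ioi (0 : ℝ), ENNReal.ofReal (t ^ s) = ∞ := by
  by_contra h
  refine not_integrableOn_Ioi_rpow s ((lintegral_ofReal_ne_top_iff_integrable ?_ ?_).1 h)
  · fun_prop
  · filter_upwards [ae_restrict_mem measurableSet_Ioi] with t ht
    exact Real.rpow_nonneg (le_of_lt ht) s

lemma lintegral_rpow_eq_lintegral_meas_ofReal_lt_mul (hf : AEMeasurable f μ) {q : ℝ}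
    (hq : 0 < q) :
    ∫⁻ x, f x ^ q ∂μ = ENNReal.ofReal q *
      ∫⁻ t in Set.Ioi (0 : ℝ), μ {x | ENNReal.ofReal t < f x} * ENNReal.ofReal (t ^ (q - 1)) := by
  by_cases hfin : ∀ᵐ x ∂μ, f x ≠ ∞
  · have hreal := lintegral_rpow_eq_lintegral_meas_lt_mul μ (f := fun x => (f x).toReal)
      (.of_forall fun _ => ENNReal.toReal_nonneg) hf.ennreal_toReal hq
    convert hreal using 1
    · refine lintegral_congr_ae ?_
      filter_upwards [hfin] with x hx
      rw [← ENNReal.ofReal_rpow_of_nonneg ENNReal.toReal_nonneg hq.le, ENNReal.ofReal_toReal hx]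
    · congr 1
      refine setLIntegral_congr_fun measurableSet_Ioi fun t ht => ?_
      congr 1
      refine measure_congr ?_
      filter_upwards [hfin] with x hx
      exact propext (ENNReal.ofReal_lt_iff_lt_toReal (le_of_lt ht) hx)
  · have hpos : μ {x | f x = ∞} ≠ 0 := by simpa [ae_iff] using hfin
    have hleft : ∫⁻ x, f x ^ q ∂μ = ∞ :=
      lintegral_eq_top_of_measure_eq_top_ne_zero (hf.pow_const q)
        (by simpa [ENNReal.rpow_eq_top_iff_of_pos hq] using hpos)
    have hright : ∫⁻ t in Set.Ioi (0 : ℝ),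
        μ {x | ENNReal.ofReal t < f x} * ENNReal.ofReal (t ^ (q - 1)) = ∞ := by
      refine top_unique ?_
      calc ∞ = ∫⁻ t in Set.Ioi (0 : ℝ), μ {x | f x = ∞} * ENNReal.ofReal (t ^ (q - 1)) := by
            rw [lintegral_const_mul _ (by fun_prop), lintegral_Ioi_ofReal_rpow_eq_top,
              ENNReal.mul_top hpos]
        _ ≤ _ := by
            gcongr with t x
            rintro hx
            simp [hx]
    rw [hleft, hright, ENNReal.mul_top (ENNReal.ofReal_pos.2 hq).ne']

end LayerCake

section Balls

open Metric

lemma lowerSemicontinuous_setLIntegral_ball {X : Type*} [PseudoMetricSpace X] [MeasurableSpace X]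
    (μ : Measure X) (f : X → ℝ≥0∞) (R : ℝ) :
    LowerSemicontinuous fun x => ∫⁻ y in ball x R, f y ∂μ := by
  intro x t ht
  have hU : ball x R = ⋃ k : ℕ, ball x (R - 1 / ((k : ℝ) + 1)) := by
    ext y
    simp only [mem_ball, Set.mem_iUnion]
    refine ⟨fun h => ?_, fun ⟨k, hk⟩ => hk.trans (sub_lt_self R (by positivity))⟩
    obtain ⟨k, hk⟩ := exists_nat_one_div_lt (sub_pos.2 h)
    exact ⟨k, by linarith⟩
  have hmono : Monotone fun k : ℕ => ball x (R - 1 / ((k : ℝ) + 1)) := fun k l hkl =>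
    ball_subset_ball (sub_le_sub_left (Nat.one_div_le_one_div hkl) R)
  simp only at ht
  rw [hU, setLIntegral_iUnion_of_directed _ hmono.directed_le, gt_iff_lt, lt_iSup_iff] at ht
  obtain ⟨k, hk⟩ := ht
  filter_upwards [ball_mem_nhds x (Nat.one_div_pos_of_nat (n := k))] with y hy
  refine hk.trans_le (lintegral_mono_set (ball_subset_ball' ?_))
  rw [dist_comm]
  linarith [mem_ball.1 hy]

variable {V : Type*} [NormedAddCommGroup V] [NormedSpace ℝ V] [FiniteDimensional ℝ V]
  [MeasurableSpace V] [BorelSpace V] (μ : Measure V) [μ.IsAddHaarMeasure]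

lemma addHaar_closedBall_five_mul (x : V) {r : ℝ} (hr : 0 < r) :
    μ (closedBall x (5 * r)) = 5 ^ Module.finrank ℝ V * μ (ball x r) := by
  rw [Measure.addHaar_closedBall _ _ (by positivity), Measure.addHaar_ball_of_pos _ _ hr,
    mul_pow, ENNReal.ofReal_mul (by positivity), mul_assoc, ENNReal.ofReal_pow (by positivity),
    ENNReal.ofReal_ofNat]

lemma mul_addHaar_le_of_forall_exists_le_laverage_ball (f : V → ℝ≥0∞) (t : ℝ≥0∞) (K : ℝ)
    (s : Set V) (hs : ∀ x ∈ s, ∃ R ∈ Set.Ioc 0 K, t ≤ ⨍⁻ y in ball x R, f y ∂μ) :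
    t * μ s ≤ 5 ^ Module.finrank ℝ V * ∫⁻ y, f y ∂μ := by
  choose! r hr ht using hs
  obtain ⟨u, hus, hdisj, hcov⟩ :=
    Vitali.exists_disjoint_subfamily_covering_enlargement_closedBall s id r K
      (fun x hx => (hr x hx).2) 5 (by norm_num)
  have hpos : ∀ x ∈ u, 0 < r x := fun x hx => (hr x (hus hx)).1
  have hcount : u.Countable := hdisj.countable_of_nonempty_interior fun x hx =>
    ⟨x, ball_subset_interior_closedBall (mem_ball_self (hpos x hx))⟩
  have hsub : s ⊆ ⋃ x ∈ u, closedBall x (5 * r x) := by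
    intro x hx
    obtain ⟨b, hb, hxb⟩ := hcov x hx
    exact Set.mem_iUnion₂.2 ⟨b, hb, hxb (mem_closedBall_self (hr x hx).1.le)⟩
  have hball : ∀ x ∈ u, t * μ (ball x (r x)) ≤ ∫⁻ y in ball x (r x), f y ∂μ := by
    intro x hx
    rw [← measure_mul_setLAverage f measure_ball_lt_top.ne, mul_comm]
    gcongr
    exact ht x (hus hx)
  calc t * μ s
      ≤ t * ∑' x : u, μ (closedBall (x : V) (5 * r x)) := by
        gcongr
        exact (measure_mono hsub).trans (measure_biUnion_le _ hcount _)
    _ = 5 ^ Module.finrank ℝ V * ∑' x : u, t * μ (ball (x : V) (r x)) := by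
        simp_rw [fun x : u => addHaar_closedBall_five_mul μ (x : V) (hpos x x.2),
          ENNReal.tsum_mul_left]
        ring
    _ ≤ 5 ^ Module.finrank ℝ V * ∑' x : u, ∫⁻ y in ball (x : V) (r x), f y ∂μ := by
        gcongr with x
        exact hball x x.2
    _ = 5 ^ Module.finrank ℝ V * ∫⁻ y in ⋃ x ∈ u, ball x (r x), f y ∂μ := by
        rw [lintegral_biUnion hcount (fun x _ => measurableSet_ball)]
        exact hdisj.mono fun x => ball_subset_closedBall
    _ ≤ 5 ^ Module.finrank ℝ V * ∫⁻ y, f y ∂μ := by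
        gcongr
        exact Measure.restrict_le_self

end Balls

section Maximal

open Metric

variable {n : ℕ} {f : EuclideanSpace ℝ (Fin n) → ℝ≥0∞} {x : EuclideanSpace ℝ (Fin n)}

local notation "E" => EuclideanSpace ℝ (Fin n)

lemma HLmax_eq_iSup_laverage (f : E → ℝ≥0∞) (x : E) :
    HLmax f x = ⨆ R : Set.Ioi (0 : ℝ), ⨍⁻ y in ball x (R : ℝ), f y ∂volume := by
  simp only [HLmax, setLAverage_eq, ENNReal.div_eq_inv_mul]

lemma laverage_ball_le_HLmax (f : E → ℝ≥0∞) (x : E) {R : ℝ} (hR : 0 < R) :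
    ⨍⁻ y in ball x R, f y ∂volume ≤ HLmax f x := by
  rw [HLmax_eq_iSup_laverage]
  exact le_iSup (fun R : Set.Ioi (0 : ℝ) => ⨍⁻ y in ball x (R : ℝ), f y ∂volume) ⟨R, hR⟩

lemma HLmax_le {B : ℝ≥0∞} (h : ∀ R : ℝ, 0 < R → ⨍⁻ y in ball x R, f y ∂volume ≤ B) :
    HLmax f x ≤ B := by
  rw [HLmax_eq_iSup_laverage]
  exact iSup_le fun R => h R R.2

lemma exists_lt_laverage_of_lt_HLmax {t : ℝ≥0∞} (h : t < HLmax f x) :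
    ∃ R : ℝ, 0 < R ∧ t < ⨍⁻ y in ball x R, f y ∂volume := by
  by_contra! hle
  exact h.not_ge (HLmax_le hle)

lemma HLmax_le_HLmax_add_const {g : E → ℝ≥0∞} (hg : Measurable g) {c : ℝ≥0∞}
    (h : ∀ y, f y ≤ g y + c) (x : E) : HLmax f x ≤ HLmax g x + c := by
  refine HLmax_le fun R hR => ?_
  calc ⨍⁻ y in ball x R, f y ∂volume
      ≤ ⨍⁻ y in ball x R, (g y + c) ∂volume := setLAverage_mono_ae _ (.of_forall h)
    _ = ⨍⁻ y in ball x R, g y ∂volume + ⨍⁻ _ in ball x R, c ∂volume := by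
        simp only [setLAverage_eq, lintegral_add_left hg, ENNReal.add_div]
    _ ≤ HLmax g x + c := by
        rw [setLAverage_const (measure_ball_pos _ _ hR).ne' measure_ball_lt_top.ne]
        gcongr
        exact laverage_ball_le_HLmax g x hR

lemma lowerSemicontinuous_HLmax (f : E → ℝ≥0∞) : LowerSemicontinuous (HLmax f) := by
  simp only [funext (HLmax_eq_iSup_laverage f), setLAverage_eq]
  refine lowerSemicontinuous_iSup fun R => ?_
  simp only [Measure.addHaar_ball_center volume _ (R : ℝ)]
  exact (ENNReal.continuous_div_const _ (measure_ball_pos _ _ R.2).ne').comp_lowerSemicontinuous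
    (lowerSemicontinuous_setLIntegral_ball volume f R) fun _ _ h => ENNReal.div_le_div_right h _

lemma mul_volume_lt_HLmax_le (f : E → ℝ≥0∞) (t : ℝ≥0∞) :
    t * volume {x | t < HLmax f x} ≤ 5 ^ n * ∫⁻ y, f y := by
  let A : ℕ → Set E := fun k => {x | ∃ R ∈ Set.Ioc (0 : ℝ) k, t ≤ ⨍⁻ y in ball x R, f y ∂volume}
  have hA : Monotone A := fun k l hkl x ⟨R, hR, h⟩ =>
    ⟨R, ⟨hR.1, hR.2.trans (by exact_mod_cast hkl)⟩, h⟩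
  have hsub : {x | t < HLmax f x} ⊆ ⋃ k, A k := by
    intro x hx
    obtain ⟨R, hR, h⟩ := exists_lt_laverage_of_lt_HLmax hx
    obtain ⟨k, hk⟩ := exists_nat_ge R
    exact Set.mem_iUnion.2 ⟨k, R, ⟨hR, hk⟩, h.le⟩
  calc t * volume {x | t < HLmax f x} ≤ t * volume (⋃ k, A k) := by gcongr
    _ = ⨆ k, t * volume (A k) := by rw [hA.measure_iUnion, ENNReal.mul_iSup]
    _ ≤ 5 ^ n * ∫⁻ y, f y := iSup_le fun k => by
        simpa using mul_addHaar_le_of_forall_exists_le_laverage_ball volume f t k (A k)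
          fun x hx => hx

-- Discarding the part of `f` below `t / 2` lowers `HLmax f` by at most `t / 2`.
lemma mul_volume_lt_HLmax_le_setLIntegral (hf : Measurable f) (t : ℝ≥0∞) :
    t * volume {x | t < HLmax f x} ≤ 2 * 5 ^ n * ∫⁻ y in {y | t < 2 * f y}, f y := by
  have hS : MeasurableSet {y | t < 2 * f y} := measurableSet_lt measurable_const (hf.const_mul 2)
  set g : E → ℝ≥0∞ := {y | t < 2 * f y}.indicator f
  have htwo : 2 * (t / 2) = t := ENNReal.mul_div_cancel (by norm_num) (by norm_num)
  have hfg : ∀ y, f y ≤ g y + t / 2 := by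
    intro y
    by_cases hy : t < 2 * f y
    · simp [g, hy]
    · refine le_add_left ?_
      rwa [ENNReal.le_div_iff_mul_le (by simp) (by simp), mul_comm, ← not_lt]
  have hsub : {x | t < HLmax f x} ⊆ {x | t / 2 < HLmax g x} := by
    intro x hx
    refine lt_of_add_lt_add_right (a := t / 2) ?_
    rw [ENNReal.add_halves]
    exact lt_of_lt_of_le hx (HLmax_le_HLmax_add_const (hf.indicator hS) hfg x)
  calc t * volume {x | t < HLmax f x}
      ≤ 2 * (t / 2 * volume {x | t / 2 < HLmax g x}) := by
        rw [← mul_assoc, htwo]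
        gcongr
    _ ≤ 2 * (5 ^ n * ∫⁻ y, g y) := by
        gcongr 2 * ?_
        exact mul_volume_lt_HLmax_le g _
    _ = 2 * 5 ^ n * ∫⁻ y in {y | t < 2 * f y}, f y := by rw [lintegral_indicator hS, mul_assoc]

lemma lintegral_two_mul_rpow_withDensity (hf : Measurable f) {q : ℝ} (hq : 1 < q) :
    ∫⁻ y, (2 * f y) ^ (q - 1) ∂volume.withDensity f = 2 ^ (q - 1) * ∫⁻ y, f y ^ q := by
  rw [lintegral_withDensity_eq_lintegral_mul _ hf (by fun_prop),
    ← lintegral_const_mul _ (by fun_prop)]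
  refine lintegral_congr fun y => ?_
  have hpow : f y ^ q = f y * f y ^ (q - 1) := by
    nth_rewrite 2 [← ENNReal.rpow_one (f y)]
    rw [← ENNReal.rpow_add_of_nonneg _ _ zero_le_one (by linarith), add_sub_cancel]
  rw [Pi.mul_apply, ENNReal.mul_rpow_of_nonneg _ _ (by linarith), hpow, mul_left_comm]

lemma lintegral_HLmax_rpow_le (hf : Measurable f) {q : ℝ} (hq : 1 < q) :
    ∫⁻ x, HLmax f x ^ q ≤
      2 * 5 ^ n * ENNReal.ofReal (q / (q - 1)) * 2 ^ (q - 1) * ∫⁻ x, f x ^ q := by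
  have hq1 : 0 < q - 1 := by linarith
  set ρ : Measure E := volume.withDensity f
  have hlevel : ∀ t ∈ Set.Ioi (0 : ℝ),
      volume {x | ENNReal.ofReal t < HLmax f x} * ENNReal.ofReal (t ^ (q - 1)) ≤
        2 * 5 ^ n *
          (ρ {y | ENNReal.ofReal t < 2 * f y} * ENNReal.ofReal (t ^ (q - 1 - 1))) := by
    intro t ht
    have hpow : ENNReal.ofReal (t ^ (q - 1)) =
        ENNReal.ofReal t * ENNReal.ofReal (t ^ (q - 1 - 1)) := by
      rw [← ENNReal.ofReal_mul (le_of_lt ht), Real.rpow_sub_one (ne_of_gt ht) (q - 1),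
        mul_div_cancel₀ _ (ne_of_gt ht)]
    rw [hpow, ← mul_assoc, ← mul_assoc, mul_comm (volume _),
      withDensity_apply _ (measurableSet_lt measurable_const (hf.const_mul 2))]
    gcongr ?_ * _
    exact mul_volume_lt_HLmax_le_setLIntegral hf _
  have hcoeff : ENNReal.ofReal q = ENNReal.ofReal (q / (q - 1)) * ENNReal.ofReal (q - 1) := by
    rw [← ENNReal.ofReal_mul (by positivity), div_mul_cancel₀ _ hq1.ne']
  calc ∫⁻ x, HLmax f x ^ q
      = ENNReal.ofReal q * ∫⁻ t in Set.Ioi (0 : ℝ),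
          volume {x | ENNReal.ofReal t < HLmax f x} * ENNReal.ofReal (t ^ (q - 1)) :=
        lintegral_rpow_eq_lintegral_meas_ofReal_lt_mul
          (lowerSemicontinuous_HLmax f).measurable.aemeasurable (by linarith)
    _ ≤ ENNReal.ofReal q * ∫⁻ t in Set.Ioi (0 : ℝ),
          2 * 5 ^ n * (ρ {y | ENNReal.ofReal t < 2 * f y} * ENNReal.ofReal (t ^ (q - 1 - 1))) := by
        gcongr ENNReal.ofReal q * ?_
        exact setLIntegral_mono' measurableSet_Ioi hlevel
    _ = 2 * 5 ^ n * ENNReal.ofReal (q / (q - 1)) * (ENNReal.ofReal (q - 1) *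
          ∫⁻ t in Set.Ioi (0 : ℝ),
            ρ {y | ENNReal.ofReal t < 2 * f y} * ENNReal.ofReal (t ^ (q - 1 - 1))) := by
        rw [lintegral_const_mul' _ _ (by finiteness), hcoeff]
        ring
    _ = 2 * 5 ^ n * ENNReal.ofReal (q / (q - 1)) * 2 ^ (q - 1) * ∫⁻ x, f x ^ q := by
        rw [← lintegral_rpow_eq_lintegral_meas_ofReal_lt_mul (hf.const_mul 2).aemeasurable hq1,
          lintegral_two_mul_rpow_withDensity hf hq, ← mul_assoc]

variable (n) in
lemma exists_eLpNorm_HLmax_le {p : ℝ≥0∞} (hp : 1 < p) :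
    ∃ D : ℝ≥0∞, D ≠ ∞ ∧ ∀ f : E → ℝ≥0∞, Measurable f →
      eLpNorm (HLmax f) p volume ≤ D * eLpNorm f p volume := by
  rcases eq_or_ne p ∞ with rfl | hp_top
  · refine ⟨1, ENNReal.one_ne_top, fun f _ => ?_⟩
    simp only [eLpNorm_exponent_top, eLpNormEssSup_eq_essSup_enorm, enorm_eq_self, one_mul]
    exact essSup_le_of_ae_le _ (.of_forall fun x => HLmax_le fun R _ => setLAverage_le_essSup _ f)
  · have hq : 1 < p.toReal := by simpa using (ENNReal.toReal_lt_toReal (by simp) hp_top).2 hp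
    refine ⟨(2 * 5 ^ n * ENNReal.ofReal (p.toReal / (p.toReal - 1)) * 2 ^ (p.toReal - 1)) ^
      (1 / p.toReal), by finiteness, fun f hf => ?_⟩
    simp only [eLpNorm_eq_lintegral_rpow_enorm_toReal (zero_lt_one.trans hp).ne' hp_top,
      enorm_eq_self]
    rw [← ENNReal.mul_rpow_of_nonneg _ _ (by positivity)]
    gcongr
    exact lintegral_HLmax_rpow_le hf hq

end Maximal

section Dyadic

open Metric

variable {n : ℕ}

local notation "E" => EuclideanSpace ℝ (Fin n)

lemma dyadicCube_eq_preimage (J : ℤ) (v : Fin n → ℤ) :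
    dyadicCube n J v = WithLp.ofLp ⁻¹' (Set.univ.pi fun i =>
      Set.Ioo ((2 : ℝ) ^ (-J) * (v i : ℝ)) ((2 : ℝ) ^ (-J) * ((v i : ℝ) + 1))) := by
  ext x
  simp [dyadicCube]

lemma measurableSet_dyadicCube (J : ℤ) (v : Fin n → ℤ) : MeasurableSet (dyadicCube n J v) := by
  rw [dyadicCube_eq_preimage]
  exact (PiLp.volume_preserving_ofLp (Fin n)).measurable
    (MeasurableSet.univ_pi fun _ => measurableSet_Ioo)

lemma ofReal_two_rpow (r : ℝ) : ENNReal.ofReal ((2 : ℝ) ^ r) = (2 : ℝ≥0∞) ^ r := by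
  rw [← ENNReal.ofReal_rpow_of_pos two_pos, ENNReal.ofReal_ofNat]

lemma two_rpow_add (a b : ℝ) : (2 : ℝ≥0∞) ^ (a + b) = 2 ^ a * 2 ^ b :=
  ENNReal.rpow_add _ _ two_ne_zero ENNReal.ofNat_ne_top

lemma ofReal_two_zpow_pow (n : ℕ) (K : ℤ) :
    ENNReal.ofReal ((2 : ℝ) ^ K) ^ n = (2 : ℝ≥0∞) ^ ((n : ℝ) * K) := by
  rw [← Real.rpow_intCast, ofReal_two_rpow, ← ENNReal.rpow_natCast, ← ENNReal.rpow_mul, mul_comm]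

lemma volume_dyadicCube (J : ℤ) (v : Fin n → ℤ) :
    volume (dyadicCube n J v) = (2 : ℝ≥0∞) ^ (-((n : ℝ) * J)) := by
  rw [dyadicCube_eq_preimage, (PiLp.volume_preserving_ofLp (Fin n)).measure_preimage
    (MeasurableSet.univ_pi fun _ => measurableSet_Ioo).nullMeasurableSet, Real.volume_pi_Ioo]
  have hside : ∀ i, (2 : ℝ) ^ (-J) * ((v i : ℝ) + 1) - 2 ^ (-J) * (v i : ℝ) = 2 ^ (-J) :=
    fun i => by ring
  simp_rw [hside]
  rw [Finset.prod_const, Finset.card_univ, Fintype.card_fin, ofReal_two_zpow_pow, Int.cast_neg,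
    mul_neg]

/-- The index `v` for which `x` lies in the half-open cube `2^{−J}v + [0, 2^{−J})ⁿ`. These cubes
partition the whole space, while the open cubes `dyadicCube n J v` cover it only up to a null
set. -/
noncomputable def dyadicIndex (J : ℤ) (x : E) : Fin n → ℤ := fun i => ⌊(2 : ℝ) ^ J * x i⌋

lemma dyadicIndex_apply_eq_iff {J : ℤ} {x : E} {i : Fin n} {m : ℤ} : dyadicIndex J x i = m ↔
    (2 : ℝ) ^ (-J) * m ≤ x i ∧ x i < (2 : ℝ) ^ (-J) * (m + 1) := by
  rw [dyadicIndex, Int.floor_eq_iff, zpow_neg, inv_mul_le_iff₀ (by positivity),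
    lt_inv_mul_iff₀ (by positivity)]

lemma dyadicIndex_eq_of_mem_dyadicCube {J : ℤ} {v : Fin n → ℤ} {x : E}
    (hx : x ∈ dyadicCube n J v) : dyadicIndex J x = v :=
  funext fun i => dyadicIndex_apply_eq_iff.2 ⟨(hx i).1.le, (hx i).2⟩

lemma ae_mem_dyadicCube_dyadicIndex (J : ℤ) :
    ∀ᵐ x : E, x ∈ dyadicCube n J (dyadicIndex J x) := by
  have hne : ∀ᵐ x : E, ∀ (i : Fin n) (m : ℤ), x i ≠ (2 : ℝ) ^ (-J) * m := by
    simp_rw [ae_all_iff]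
    intro i m
    have h : ∀ᵐ y : Fin n → ℝ, y i ≠ (2 : ℝ) ^ (-J) * m := by
      simpa [ae_iff, volume_pi] using
        Measure.pi_hyperplane (fun _ : Fin n => (volume : Measure ℝ)) i (2 ^ (-J) * (m : ℝ))
    exact (PiLp.volume_preserving_ofLp (Fin n)).quasiMeasurePreserving.ae h
  filter_upwards [hne] with x hx i
  obtain ⟨hle, hlt⟩ := dyadicIndex_apply_eq_iff.1 (rfl : dyadicIndex J x i = dyadicIndex J x i)
  exact ⟨hle.lt_of_ne (hx i _).symm, hlt⟩

lemma dyadicIndex_mem_Icc_of_dist_lt {J : ℤ} {x y : E} (h : dist y x < 2 ^ (-J)) :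
    dyadicIndex J y ∈ Finset.Icc (dyadicIndex J x - 1) (dyadicIndex J x + 1) := by
  have hcoord : ∀ i, |2 ^ J * y i - 2 ^ J * x i| < 1 := by
    intro i
    have hi : |y i - x i| < 2 ^ (-J) :=
      ((PiLp.norm_apply_le (y - x) i).trans_eq (dist_eq_norm y x).symm).trans_lt h
    rw [zpow_neg, ← mul_one (_)⁻¹, lt_inv_mul_iff₀ (by positivity)] at hi
    rwa [← mul_sub, abs_mul, abs_of_pos (by positivity)]
  simp only [Finset.mem_Icc, Pi.le_def, Pi.sub_apply, Pi.add_apply, Pi.one_apply, dyadicIndex]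
  refine ⟨fun i => ?_, fun i => ?_⟩
  · rw [← Int.floor_sub_one]
    exact Int.floor_mono (by linarith [(abs_lt.1 (hcoord i)).1])
  · rw [← Int.floor_add_one]
    exact Int.floor_mono (by linarith [(abs_lt.1 (hcoord i)).2])

lemma dyadicIndex_add_natCast_mem_Icc (J : ℤ) (k : ℕ) (x : E) :
    dyadicIndex (J + k) x ∈ Finset.Icc (2 ^ k * dyadicIndex J x)
      (2 ^ k * dyadicIndex J x + (2 ^ k - 1)) := by
  have hscale : ∀ i, (2 : ℝ) ^ (J + k) * x i = 2 ^ k * (2 ^ J * x i) := fun i => by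
    rw [zpow_add₀ two_ne_zero, zpow_natCast]
    ring
  simp only [Finset.mem_Icc, Pi.le_def, Pi.add_apply, Pi.mul_apply, Pi.sub_apply, Pi.pow_apply,
    Pi.ofNat_apply, dyadicIndex, hscale]
  refine ⟨fun i => Int.le_floor.2 ?_, fun i => ?_⟩
  · push_cast
    gcongr
    exact Int.floor_le _
  · rw [← add_sub_assoc, Int.le_sub_one_iff, Int.floor_lt]
    push_cast
    rw [← mul_add_one]
    gcongr
    exact Int.lt_floor_add_one _

lemma card_Icc_pi_int (v : Fin n → ℤ) (m : ℕ) :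
    (Finset.Icc v (v + (m - 1))).card = m ^ n := by
  have hside : ∀ i, (v i + (m - 1) + 1 - v i).toNat = m := fun i => by omega
  simp [Pi.card_Icc, hside]

lemma exists_mem_Ioc_two_zpow_neg {R : ℝ} (hR : 0 < R) :
    ∃ K : ℤ, R ∈ Set.Ioc ((2 : ℝ) ^ (-(K + 1))) (2 ^ (-K)) := by
  obtain ⟨m, hm⟩ := exists_mem_Ioc_zpow hR one_lt_two
  exact ⟨-(m + 1), by simpa using hm⟩

end Dyadic

section Covering

open Metric

lemma eLpNorm_restrict_le_sum {α ι : Type*} [MeasurableSpace α] {μ : Measure α} {f : α → ℝ≥0∞}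
    (hf : AEMeasurable f μ) {p : ℝ≥0∞} (hp : 1 ≤ p) {s : Set α} {I : Finset ι} {t : ι → Set α}
    (ht : ∀ i ∈ I, MeasurableSet (t i)) (hst : s ≤ᵐ[μ] ⋃ i ∈ I, t i) :
    eLpNorm f p (μ.restrict s) ≤ ∑ i ∈ I, eLpNorm f p (μ.restrict (t i)) := by
  calc eLpNorm f p (μ.restrict s)
      ≤ eLpNorm f p (μ.restrict (⋃ i ∈ I, t i)) :=
        eLpNorm_mono_measure f (Measure.restrict_mono_ae hst)
    _ = eLpNorm ((⋃ i ∈ I, t i).indicator f) p μ :=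
        (eLpNorm_indicator_eq_eLpNorm_restrict (I.measurableSet_biUnion ht)).symm
    _ ≤ eLpNorm (∑ i ∈ I, (t i).indicator f) p μ := by
        refine eLpNorm_mono_enorm fun x => ?_
        simp only [enorm_eq_self, Finset.sum_apply]
        refine Set.indicator_apply_le' (fun hx => ?_) fun _ => zero_le
        obtain ⟨i, hi, hxi⟩ := Set.mem_iUnion₂.1 hx
        rw [← Set.indicator_of_mem hxi f]
        exact Finset.single_le_sum_of_canonicallyOrdered (f := fun j => (t j).indicator f x) hi
    _ ≤ ∑ i ∈ I, eLpNorm ((t i).indicator f) p μ :=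
        eLpNorm_sum_le (fun i hi => (hf.indicator (ht i hi)).aestronglyMeasurable) hp
    _ = ∑ i ∈ I, eLpNorm f p (μ.restrict (t i)) :=
        Finset.sum_congr rfl fun i hi => eLpNorm_indicator_eq_eLpNorm_restrict (ht i hi)

variable {n : ℕ} {f : EuclideanSpace ℝ (Fin n) → ℝ≥0∞}

local notation "E" => EuclideanSpace ℝ (Fin n)

lemma eLpNorm_restrict_le_card_mul (hf : Measurable f) {p : ℝ≥0∞} (hp : 1 ≤ p) {J : ℤ} {s : Set E}
    {I : Finset (Fin n → ℤ)} (hI : ∀ x ∈ s, dyadicIndex J x ∈ I) {B : ℝ≥0∞}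
    (hB : ∀ v, eLpNorm f p (volume.restrict (dyadicCube n J v)) ≤ B) :
    eLpNorm f p (volume.restrict s) ≤ I.card * B := by
  have hcov : s ≤ᵐ[volume] ⋃ v ∈ I, dyadicCube n J v := by
    filter_upwards [ae_mem_dyadicCube_dyadicIndex J] with x hx hxs
    exact Set.mem_iUnion₂.2 ⟨_, hI x hxs, hx⟩
  calc eLpNorm f p (volume.restrict s)
      ≤ ∑ v ∈ I, eLpNorm f p (volume.restrict (dyadicCube n J v)) :=
        eLpNorm_restrict_le_sum hf.aemeasurable hp (fun v _ => measurableSet_dyadicCube J v) hcov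
    _ ≤ ∑ _v ∈ I, B := Finset.sum_le_sum fun v _ => hB v
    _ = I.card * B := by rw [Finset.sum_const, nsmul_eq_mul]

lemma eLpNorm_restrict_thickening_le (hf : Measurable f) {p : ℝ≥0∞} (hp : 1 ≤ p) {J : ℤ}
    {B : ℝ≥0∞} (hB : ∀ v, eLpNorm f p (volume.restrict (dyadicCube n J v)) ≤ B)
    (v : Fin n → ℤ) :
    eLpNorm f p (volume.restrict (thickening (2 ^ (-J)) (dyadicIndex J ⁻¹' {v}))) ≤ 3 ^ n * B := by
  have hcard : (Finset.Icc (v - 1) (v + 1)).card = 3 ^ n := by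
    convert card_Icc_pi_int (v - 1) 3 using 3
    ring
  have hI : ∀ x ∈ thickening (2 ^ (-J)) (dyadicIndex J ⁻¹' {v}),
      dyadicIndex J x ∈ Finset.Icc (v - 1) (v + 1) := by
    intro x hx
    obtain ⟨y, rfl, hxy⟩ := mem_thickening_iff.1 hx
    exact dyadicIndex_mem_Icc_of_dist_lt hxy
  simpa [hcard] using eLpNorm_restrict_le_card_mul hf hp hI hB

lemma setLIntegral_ball_le (hf : Measurable f) {J : ℤ} {B : ℝ≥0∞}
    (hB : ∀ v, ∫⁻ y in dyadicCube n J v, f y ≤ B) (x : E) {R : ℝ} (hR : R ≤ 2 ^ (-J)) :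
    ∫⁻ y in ball x R, f y ≤ 3 ^ n * B := by
  have hsub : ball x R ⊆ thickening (2 ^ (-J)) (dyadicIndex J ⁻¹' {dyadicIndex J x}) :=
    (ball_subset_ball hR).trans (ball_subset_thickening (by simp) _)
  refine (lintegral_mono_set hsub).trans ?_
  simpa [eLpNorm_one_eq_lintegral_enorm] using eLpNorm_restrict_thickening_le hf le_rfl
    (by simpa [eLpNorm_one_eq_lintegral_enorm] using hB) (dyadicIndex J x)

lemma setLIntegral_dyadicCube_le_two_pow_mul (hf : Measurable f) {J : ℤ} {k : ℕ} {B : ℝ≥0∞}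
    (hB : ∀ v, ∫⁻ y in dyadicCube n (J + k) v, f y ≤ B) (v : Fin n → ℤ) :
    ∫⁻ y in dyadicCube n J v, f y ≤ (2 ^ k) ^ n * B := by
  have hcard : (Finset.Icc (2 ^ k * v) (2 ^ k * v + (2 ^ k - 1))).card = (2 ^ k) ^ n := by
    simpa using card_Icc_pi_int (2 ^ k * v) (2 ^ k)
  have hI : ∀ x ∈ dyadicCube n J v,
      dyadicIndex (J + k) x ∈ Finset.Icc (2 ^ k * v) (2 ^ k * v + (2 ^ k - 1)) := by
    intro x hx
    rw [← dyadicIndex_eq_of_mem_dyadicCube hx]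
    exact dyadicIndex_add_natCast_mem_Icc J k x
  simpa [eLpNorm_one_eq_lintegral_enorm, hcard] using eLpNorm_restrict_le_card_mul hf le_rfl hI
    (by simpa [eLpNorm_one_eq_lintegral_enorm] using hB)

end Covering

section Morrey

open Metric

variable {n : ℕ} {p : ℝ≥0∞} {τ : ℝ} {f : EuclideanSpace ℝ (Fin n) → ℝ≥0∞}

local notation "E" => EuclideanSpace ℝ (Fin n)

lemma LpOn_eq_eLpNorm (hp : p ≠ 0) (f : E → ℝ≥0∞) (s : Set E) :
    LpOn p f s = eLpNorm f p (volume.restrict s) := by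
  rcases eq_or_ne p ∞ with rfl | hp_top
  · simp [LpOn, eLpNorm_exponent_top, eLpNormEssSup]
  · simp [LpOn, hp_top, eLpNorm_eq_lintegral_rpow_enorm_toReal hp hp_top]

lemma morreyNormE_eq_iSup_eLpNorm (hp : p ≠ 0) (τ : ℝ) (f : E → ℝ≥0∞) :
    morreyNormE n p τ f = ⨆ (J : ℤ) (v : Fin n → ℤ),
      2 ^ (n * J * τ : ℝ) * eLpNorm f p (volume.restrict (dyadicCube n J v)) := by
  simp only [morreyNormE, ofReal_two_rpow, LpOn_eq_eLpNorm hp]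

lemma eLpNorm_dyadicCube_le (hp : p ≠ 0) (τ : ℝ) (f : E → ℝ≥0∞) (J : ℤ) (v : Fin n → ℤ) :
    eLpNorm f p (volume.restrict (dyadicCube n J v)) ≤
      2 ^ (-(n * J * τ) : ℝ) * morreyNormE n p τ f := by
  calc eLpNorm f p (volume.restrict (dyadicCube n J v))
      = 2 ^ (-(n * J * τ) : ℝ) *
          (2 ^ (n * J * τ : ℝ) * eLpNorm f p (volume.restrict (dyadicCube n J v))) := by
        rw [← mul_assoc, ← two_rpow_add, neg_add_cancel, ENNReal.rpow_zero, one_mul]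
    _ ≤ 2 ^ (-(n * J * τ) : ℝ) * morreyNormE n p τ f := by
        rw [morreyNormE_eq_iSup_eLpNorm hp]
        gcongr
        exact le_iSup₂ (f := fun (J : ℤ) (v : Fin n → ℤ) =>
          (2 : ℝ≥0∞) ^ (n * J * τ : ℝ) * eLpNorm f p (volume.restrict (dyadicCube n J v))) J v

lemma morreyNormE_le (hp : p ≠ 0) {B : ℝ≥0∞}
    (h : ∀ J v, eLpNorm f p (volume.restrict (dyadicCube n J v)) ≤ 2 ^ (-(n * J * τ) : ℝ) * B) :
    morreyNormE n p τ f ≤ B := by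
  rw [morreyNormE_eq_iSup_eLpNorm hp]
  refine iSup₂_le fun J v => ?_
  calc 2 ^ (n * J * τ : ℝ) * eLpNorm f p (volume.restrict (dyadicCube n J v))
      ≤ 2 ^ (n * J * τ : ℝ) * (2 ^ (-(n * J * τ) : ℝ) * B) := by
        gcongr
        exact h J v
    _ = B := by rw [← mul_assoc, ← two_rpow_add, add_neg_cancel, ENNReal.rpow_zero, one_mul]

lemma morreyNormE_rpow (hp : p ≠ 0) (τ : ℝ) (f : E → ℝ≥0∞) {r : ℝ} (hr : 0 < r) :
    morreyNormE n p τ (fun x => f x ^ r) =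
      morreyNormE n (p * ENNReal.ofReal r) (τ / r) f ^ r := by
  have hpr : p * ENNReal.ofReal r ≠ 0 := mul_ne_zero hp (ENNReal.ofReal_pos.2 hr).ne'
  have hcube : ∀ s : Set E, eLpNorm (fun x => f x ^ r) p (volume.restrict s) =
      eLpNorm f (p * ENNReal.ofReal r) (volume.restrict s) ^ r := fun s => by
    simpa using eLpNorm_enorm_rpow (p := p) (μ := volume.restrict s) f hr
  rw [morreyNormE_eq_iSup_eLpNorm hp, morreyNormE_eq_iSup_eLpNorm hpr,
    ← ENNReal.orderIsoRpow_apply r hr]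
  simp only [OrderIso.map_iSup, ENNReal.orderIsoRpow_apply, hcube,
    ENNReal.mul_rpow_of_nonneg _ _ hr.le, ← ENNReal.rpow_mul, ← mul_div_assoc,
    div_mul_cancel₀ _ hr.ne']

/-- Hölder's bound `2^{Jn(1/p − τ)} ‖f‖_{M^p_τ}` for the average of `f` over a dyadic cube of side
`2^{−J}`. The encoding `1 / p.toReal` of `1/p` is correct for `p = ∞` because `1 / 0 = 0`. -/
noncomputable def morreyAverageBound (n : ℕ) (p : ℝ≥0∞) (τ : ℝ)
    (f : EuclideanSpace ℝ (Fin n) → ℝ≥0∞) (J : ℤ) : ℝ≥0∞ :=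
  2 ^ (J * (n * (1 / p.toReal - τ)) : ℝ) * morreyNormE n p τ f

lemma morreyAverageBound_mono (h : 0 ≤ n * (1 / p.toReal - τ)) (f : E → ℝ≥0∞) :
    Monotone (morreyAverageBound n p τ f) := by
  intro J K hJK
  unfold morreyAverageBound
  gcongr
  exact one_le_two

lemma tendsto_morreyAverageBound (h : n * (1 / p.toReal - τ) < 0)
    (hf : morreyNormE n p τ f ≠ ∞) (J : ℤ) :
    Filter.Tendsto (fun k : ℕ => morreyAverageBound n p τ f (J + k)) Filter.atTop (nhds 0) := by
  have hlt : (2 : ℝ≥0∞) ^ (n * (1 / p.toReal - τ)) < 1 :=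
    ENNReal.rpow_lt_one_of_one_lt_of_neg (by norm_num) h
  have hJ : morreyAverageBound n p τ f J ≠ ∞ := by
    unfold morreyAverageBound
    finiteness
  have hgeom : ∀ k : ℕ, ((2 : ℝ≥0∞) ^ (n * (1 / p.toReal - τ))) ^ k *
      morreyAverageBound n p τ f J = morreyAverageBound n p τ f (J + k) := by
    intro k
    rw [morreyAverageBound, morreyAverageBound, ← mul_assoc, ← ENNReal.rpow_natCast,
      ← ENNReal.rpow_mul, ← two_rpow_add]
    push_cast
    ring_nf
  simpa only [hgeom, zero_mul] using ENNReal.Tendsto.mul_const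
    (ENNReal.tendsto_pow_atTop_nhds_zero_of_lt_one hlt) (.inr hJ)

lemma setLIntegral_dyadicCube_le (hp : 1 ≤ p) (τ : ℝ) (hf : Measurable f) (J : ℤ)
    (v : Fin n → ℤ) :
    ∫⁻ y in dyadicCube n J v, f y ≤ 2 ^ (-(n * J) : ℝ) * morreyAverageBound n p τ f J := by
  have holder := eLpNorm_le_eLpNorm_mul_rpow_measure_univ
    (μ := volume.restrict (dyadicCube n J v)) hp hf.aestronglyMeasurable
  simp only [eLpNorm_one_eq_lintegral_enorm, enorm_eq_self, Measure.restrict_apply_univ,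
    volume_dyadicCube, ENNReal.toReal_one, ← ENNReal.rpow_mul] at holder
  calc ∫⁻ y in dyadicCube n J v, f y
      ≤ eLpNorm f p (volume.restrict (dyadicCube n J v)) *
          2 ^ (-(n * J) * (1 / 1 - 1 / p.toReal) : ℝ) := holder
    _ ≤ 2 ^ (-(n * J * τ) : ℝ) * morreyNormE n p τ f *
          2 ^ (-(n * J) * (1 / 1 - 1 / p.toReal) : ℝ) := by
        gcongr
        exact eLpNorm_dyadicCube_le (zero_lt_one.trans_le hp).ne' τ f J v
    _ = 2 ^ (-(n * J) : ℝ) * morreyAverageBound n p τ f J := by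
        rw [morreyAverageBound, mul_right_comm, ← two_rpow_add, ← mul_assoc, ← two_rpow_add]
        ring_nf

lemma inv_volume_ball_le (x : E) {K : ℤ} {R : ℝ} (hR : 2 ^ (-(K + 1)) < R) :
    (volume (ball x R))⁻¹ ≤ 2 ^ n * (volume (ball (0 : E) 1))⁻¹ * 2 ^ (n * K : ℝ) := by
  have hpos : (0 : ℝ) < 2 ^ (-(K + 1)) := by positivity
  calc (volume (ball x R))⁻¹
      ≤ (volume (ball x ((2 : ℝ) ^ (-(K + 1)))))⁻¹ :=
        ENNReal.inv_le_inv.2 (measure_mono (ball_subset_ball hR.le))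
    _ = (2 ^ (-(n * (K + 1)) : ℝ))⁻¹ * (volume (ball (0 : E) 1))⁻¹ := by
        rw [Measure.addHaar_ball_of_pos _ _ hpos, finrank_euclideanSpace_fin,
          ENNReal.ofReal_pow hpos.le, ofReal_two_zpow_pow,
          ENNReal.mul_inv (.inr measure_ball_lt_top.ne) (.inr (measure_ball_pos _ _ one_pos).ne')]
        push_cast
        ring_nf
    _ = 2 ^ n * (volume (ball (0 : E) 1))⁻¹ * 2 ^ (n * K : ℝ) := by
        rw [ENNReal.rpow_neg, inv_inv, mul_add_one, two_rpow_add, ENNReal.rpow_natCast]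
        ring

lemma laverage_ball_le_morreyAverageBound (hp : 1 ≤ p) (τ : ℝ) (hf : Measurable f) (x : E) {K : ℤ}
    {R : ℝ} (hR : R ∈ Set.Ioc ((2 : ℝ) ^ (-(K + 1))) (2 ^ (-K))) :
    ⨍⁻ y in ball x R, f y ∂volume ≤
      6 ^ n * (volume (ball (0 : E) 1))⁻¹ * morreyAverageBound n p τ f K := by
  calc ⨍⁻ y in ball x R, f y ∂volume
      = (volume (ball x R))⁻¹ * ∫⁻ y in ball x R, f y := by
        rw [setLAverage_eq, ENNReal.div_eq_inv_mul]
    _ ≤ 2 ^ n * (volume (ball (0 : E) 1))⁻¹ * 2 ^ (n * K : ℝ) *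
          (3 ^ n * (2 ^ (-(n * K) : ℝ) * morreyAverageBound n p τ f K)) :=
        mul_le_mul' (inv_volume_ball_le x hR.1)
          (setLIntegral_ball_le hf (setLIntegral_dyadicCube_le hp τ hf K) x hR.2)
    _ = (2 ^ n * 3 ^ n) * (volume (ball (0 : E) 1))⁻¹ * (2 ^ (n * K + -(n * K) : ℝ)) *
          morreyAverageBound n p τ f K := by
        rw [two_rpow_add]
        ring
    _ = 6 ^ n * (volume (ball (0 : E) 1))⁻¹ * morreyAverageBound n p τ f K := by
        rw [← mul_pow, add_neg_cancel, ENNReal.rpow_zero, mul_one]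
        norm_num

lemma HLmax_eq_zero_of_supercritical (hp : 1 ≤ p) (h : n * (1 / p.toReal - τ) < 0)
    (hf : Measurable f) (hfin : morreyNormE n p τ f ≠ ∞) (x : E) : HLmax f x = 0 := by
  have hcube : ∀ J v, ∫⁻ y in dyadicCube n J v, f y = 0 := by
    intro J v
    have hsub : ∀ k : ℕ, ∫⁻ y in dyadicCube n J v, f y ≤
        2 ^ (-(n * J) : ℝ) * morreyAverageBound n p τ f (J + k) := by
      intro k
      refine (setLIntegral_dyadicCube_le_two_pow_mul hf
        (setLIntegral_dyadicCube_le hp τ hf (J + k)) v).trans_eq ?_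
      rw [← mul_assoc, ← pow_mul, ← ENNReal.rpow_natCast, ← two_rpow_add]
      push_cast
      ring_nf
    have hlim : Filter.Tendsto
        (fun k : ℕ => (2 : ℝ≥0∞) ^ (-(n * J) : ℝ) * morreyAverageBound n p τ f (J + k))
        Filter.atTop (nhds 0) := by
      simpa only [mul_zero] using ENNReal.Tendsto.const_mul
        (tendsto_morreyAverageBound h hfin J) (.inr (by finiteness))
    exact le_antisymm (ge_of_tendsto' hlim hsub) zero_le
  refine le_antisymm (HLmax_le fun R hR => ?_) zero_le
  obtain ⟨K, hK⟩ := exists_mem_Ioc_two_zpow_neg hR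
  have hball := setLIntegral_ball_le hf (fun v => (hcube K v).le) x hK.2
  rw [mul_zero, nonpos_iff_eq_zero] at hball
  rw [setLAverage_eq, hball, ENNReal.zero_div]

lemma HLmax_le_add_morreyAverageBound (hp : 1 ≤ p) (h : 0 ≤ n * (1 / p.toReal - τ))
    (hf : Measurable f) (J : ℤ) (x : E) :
    HLmax f x ≤
      HLmax ((thickening (2 ^ (-J)) (dyadicIndex J ⁻¹' {dyadicIndex J x})).indicator f) x +
        6 ^ n * (volume (ball (0 : E) 1))⁻¹ * morreyAverageBound n p τ f J := by
  refine HLmax_le fun R hR => ?_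
  rcases le_total R ((2 : ℝ) ^ (-J)) with hRJ | hRJ
  · have hsub : ball x R ⊆ thickening (2 ^ (-J)) (dyadicIndex J ⁻¹' {dyadicIndex J x}) :=
      (ball_subset_ball hRJ).trans (ball_subset_thickening (by simp) _)
    refine le_add_right (le_trans (le_of_eq ?_) (laverage_ball_le_HLmax _ x hR))
    exact setLAverage_congr_fun measurableSet_ball fun y hy =>
      (Set.indicator_of_mem (hsub hy) f).symm
  · obtain ⟨K, hK⟩ := exists_mem_Ioc_two_zpow_neg hR
    have hKJ : K ≤ J := by
      simpa using (zpow_le_zpow_iff_right₀ (one_lt_two (α := ℝ))).1 (hRJ.trans hK.2)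
    refine le_add_left ((laverage_ball_le_morreyAverageBound hp τ hf x hK).trans ?_)
    gcongr
    exact morreyAverageBound_mono h f hKJ

lemma eLpNorm_const_mul_morreyAverageBound (hp : p ≠ 0) (τ : ℝ) (f : E → ℝ≥0∞) (c : ℝ≥0∞) (J : ℤ)
    (v : Fin n → ℤ) :
    eLpNorm (fun _ => c * morreyAverageBound n p τ f J) p (volume.restrict (dyadicCube n J v)) =
      c * (2 ^ (-(n * J * τ) : ℝ) * morreyNormE n p τ f) := by
  have hQ : volume.restrict (dyadicCube n J v) ≠ 0 := by simp [volume_dyadicCube]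
  rw [eLpNorm_const _ hp hQ, enorm_eq_self, Measure.restrict_apply_univ, volume_dyadicCube,
    ← ENNReal.rpow_mul, morreyAverageBound, mul_assoc, mul_right_comm (2 ^ _), ← two_rpow_add]
  ring_nf

lemma eLpNorm_HLmax_dyadicCube_le (hp : 1 ≤ p) (h : 0 ≤ n * (1 / p.toReal - τ)) {D : ℝ≥0∞}
    (hD : ∀ g : E → ℝ≥0∞, Measurable g → eLpNorm (HLmax g) p volume ≤ D * eLpNorm g p volume)
    (hf : Measurable f) (J : ℤ) (v : Fin n → ℤ) :
    eLpNorm (HLmax f) p (volume.restrict (dyadicCube n J v)) ≤ 2 ^ (-(n * J * τ) : ℝ) *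
      ((D * 3 ^ n + 6 ^ n * (volume (ball (0 : E) 1))⁻¹) * morreyNormE n p τ f) := by
  have hp0 : p ≠ 0 := (zero_lt_one.trans_le hp).ne'
  set Q := dyadicCube n J v
  set g : E → ℝ≥0∞ := (thickening (2 ^ (-J)) (dyadicIndex J ⁻¹' {v})).indicator f
  set A : ℝ≥0∞ := 6 ^ n * (volume (ball (0 : E) 1))⁻¹
  set N := morreyNormE n p τ f
  have hS : MeasurableSet (thickening (2 ^ (-J)) (dyadicIndex J ⁻¹' {v} : Set E)) :=
    isOpen_thickening.measurableSet
  have hnear : eLpNorm g p volume ≤ 3 ^ n * (2 ^ (-(n * J * τ) : ℝ) * N) := by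
    rw [eLpNorm_indicator_eq_eLpNorm_restrict hS]
    exact eLpNorm_restrict_thickening_le hf hp (eLpNorm_dyadicCube_le hp0 τ f J) v
  calc eLpNorm (HLmax f) p (volume.restrict Q)
      ≤ eLpNorm (HLmax g + fun _ => A * morreyAverageBound n p τ f J) p (volume.restrict Q) := by
        refine eLpNorm_mono_enorm_ae ?_
        filter_upwards [ae_restrict_mem (measurableSet_dyadicCube J v)] with x hx
        have hpt := HLmax_le_add_morreyAverageBound hp h hf J x
        rw [dyadicIndex_eq_of_mem_dyadicCube hx] at hpt
        simpa only [enorm_eq_self, Pi.add_apply] using hpt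
    _ ≤ eLpNorm (HLmax g) p (volume.restrict Q) +
          eLpNorm (fun _ => A * morreyAverageBound n p τ f J) p (volume.restrict Q) :=
        eLpNorm_add_le (lowerSemicontinuous_HLmax g).measurable.aestronglyMeasurable
          aestronglyMeasurable_const hp
    _ ≤ D * (3 ^ n * (2 ^ (-(n * J * τ) : ℝ) * N)) + A * (2 ^ (-(n * J * τ) : ℝ) * N) := by
        rw [eLpNorm_const_mul_morreyAverageBound hp0]
        gcongr
        refine (eLpNorm_restrict_le _ _ _ _).trans ((hD g (hf.indicator hS)).trans ?_)
        gcongr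
    _ = 2 ^ (-(n * J * τ) : ℝ) * ((D * 3 ^ n + A) * N) := by ring

variable (n) in
theorem exists_morreyNormE_HLmax_le (hp : 1 < p) (τ : ℝ) :
    ∃ C : ℝ≥0∞, 0 < C ∧ C < ∞ ∧ ∀ f : E → ℝ≥0∞, Measurable f →
      morreyNormE n p τ (HLmax f) ≤ C * morreyNormE n p τ f := by
  have hp0 : p ≠ 0 := (zero_lt_one.trans hp).ne'
  have hball : volume (ball (0 : E) 1) ≠ 0 := (measure_ball_pos _ _ one_pos).ne'
  obtain ⟨D, hD, hmax⟩ := exists_eLpNorm_HLmax_le n hp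
  refine ⟨D * 3 ^ n + 6 ^ n * (volume (ball (0 : E) 1))⁻¹, ?_, by finiteness, fun f hf => ?_⟩
  · exact (ENNReal.mul_pos (by positivity) (ENNReal.inv_ne_zero.2 measure_ball_lt_top.ne)).trans_le
      le_add_self
  rcases le_or_gt 0 (n * (1 / p.toReal - τ)) with h | h
  · exact morreyNormE_le hp0 (eLpNorm_HLmax_dyadicCube_le hp.le h hmax hf)
  rcases eq_or_ne (morreyNormE n p τ f) ∞ with hN | hN
  · simp [hN, measure_ball_lt_top.ne]
  · have hzero : HLmax f = fun _ => 0 :=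
      funext (HLmax_eq_zero_of_supercritical hp.le h hf hN)
    exact morreyNormE_le hp0 fun J v => by simp [hzero]

end Morrey

theorem stmt14_general (n : ℕ) {γ : ℝ} (hγ : 0 < γ) {p : ℝ≥0∞} (hγp : ENNReal.ofReal γ < p)
    (τ : ℝ) :
    ∃ C : ℝ≥0∞, 0 < C ∧ C < ∞ ∧ ∀ f : EuclideanSpace ℝ (Fin n) → ℝ≥0∞, Measurable f →
      morreyNormE n p τ (fun x => HLmax (fun y => f y ^ γ) x ^ (1 / γ)) ≤
        C * morreyNormE n p τ f := by
  have hγ' : 0 < 1 / γ := one_div_pos.2 hγ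
  have hp0 : p ≠ 0 := ne_bot_of_gt hγp
  have hcancel : ENNReal.ofReal (1 / γ) * ENNReal.ofReal γ = 1 := by
    rw [← ENNReal.ofReal_mul hγ'.le, one_div_mul_cancel hγ.ne', ENNReal.ofReal_one]
  have hp1 : 1 < p * ENNReal.ofReal (1 / γ) := by
    rw [← hcancel, mul_comm]
    gcongr
    exact ENNReal.ofReal_ne_top
  obtain ⟨C, hC0, hC, hmax⟩ := exists_morreyNormE_HLmax_le n hp1 (τ / (1 / γ))
  refine ⟨C ^ (1 / γ), by positivity, by finiteness, fun f hf => ?_⟩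
  calc morreyNormE n p τ (fun x => HLmax (fun y => f y ^ γ) x ^ (1 / γ))
      = morreyNormE n (p * ENNReal.ofReal (1 / γ)) (τ / (1 / γ)) (HLmax fun y => f y ^ γ) ^
          (1 / γ) := morreyNormE_rpow hp0 τ _ hγ'
    _ ≤ (C * morreyNormE n (p * ENNReal.ofReal (1 / γ)) (τ / (1 / γ)) fun y => f y ^ γ) ^
          (1 / γ) := by
        gcongr
        exact hmax _ (hf.pow_const γ)
    _ = (C * morreyNormE n p τ f ^ γ) ^ (1 / γ) := by
        rw [morreyNormE_rpow (zero_lt_one.trans hp1).ne' _ f hγ, mul_assoc p, hcancel, mul_one,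
          div_div, one_div_mul_cancel hγ.ne', div_one]
    _ = C ^ (1 / γ) * morreyNormE n p τ f := by
        rw [ENNReal.mul_rpow_of_nonneg _ _ hγ'.le, ← ENNReal.rpow_mul,
          mul_one_div_cancel hγ.ne', ENNReal.rpow_one]

/-- **Boundedness of the `γ`-power Hardy–Littlewood maximal operator on Morrey spaces.**
For `0 < γ < p ≤ ∞` and `τ ≥ 0` (including `τ = 1/p` via `M^p_{1/p} = L^∞` and `τ > 1/p`
via `M^p_τ = {0}`), there is `C > 0` with
`‖(M(|g|^γ))^{1/γ}‖_{M^p_τ} ≤ C ‖g‖_{M^p_τ}`. -/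
theorem stmt14 (n : ℕ) (γ : ℝ) (p : ℝ≥0∞) (τ : ℝ) (hγ : 0 < γ)
    (hγp : ENNReal.ofReal γ < p) (hτ : 0 ≤ τ) :
    ∃ C : ℝ≥0∞, 0 < C ∧ C < ∞ ∧
      ∀ g : EuclideanSpace ℝ (Fin n) → ℝ, Measurable g →
        morreyNormE n p τ
            (fun x => (HLmax (fun z => ENNReal.ofReal (|g z| ^ γ)) x) ^ (1 / γ))
          ≤ C * morreyNormE n p τ (fun x => ENNReal.ofReal |g x|) := by
  obtain ⟨C, hC0, hC, h⟩ := stmt14_general n hγ hγp τ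
  refine ⟨C, hC0, hC, fun g hg => ?_⟩
  simpa only [ENNReal.ofReal_rpow_of_nonneg (abs_nonneg _) hγ.le] using
    h (fun x => ENNReal.ofReal |g x|) (by fun_prop)
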